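/- For every linear tree-to-word transducer M there exists an equivalent linear tree-to-word transducer M' in which every quasi-periodic state is earliest (i.e., every state q of M' with L_q quasi-periodic satisfies lcp(L_q) = lcs(L_q) = ε, and is hence periodic). -/

import Mathlib

/-!
The outputs of a quasi-periodic state `q` with period `w` are words `A wⁿ B`, where the handles can
be chosen such that `A B` is itself an output. Moving `A` and `B` into the rules calling `q` leaves
the task of producing `wⁿ`. Here only lengths matter: they are additive over the arguments of a
rule, so replacing one argument shows that every state reached from `q` also has all its output
lengths congruent modulo `|w|`. Such a state can therefore emit one copy of `w` for every `|w|`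
letters by which its original output exceeds the shortest one, and since copies of `w` commute, the
copies emitted by the arguments of a rule add up to `wⁿ` whatever their order. All these new states
emit `ε` on a shortest output, so they are earliest.
-/

namespace LTWpaper

/-- Trees over a ranked alphabet: a symbol of arity `n` with `n` children. -/
inductive RTree (F : Type) (ar : F → ℕ) : Type
  | node (f : F) (ts : Fin (ar f) → RTree F ar) : RTree F ar

/-- A rule right-hand side `u₀ q₁(x_{σ(1)}) u₁ … q_n(x_{σ(n)}) u_n`:
`word i` is `u_i` (for `i : Fin (n+1)`), `st i` is `q_{i+1}` (for `i : Fin n`),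
and position `i` reads the subtree `x_{perm i}`. -/
structure LTWRule (Δ Q : Type) (n : ℕ) where
  word : Fin (n + 1) → List Δ
  st : Fin n → Q
  perm : Equiv.Perm (Fin n)

/-- A (deterministic) linear tree-to-word transducer with axiom `pre init(x) post`. -/
structure LTW (F : Type) (ar : F → ℕ) (Δ Q : Type) where
  pre : List Δ
  init : Q
  post : List Δ
  rules : Q → (f : F) → Option (LTWRule Δ Q (ar f))

/-- `u 0 ++ ws 0 ++ u 1 ++ ws 1 ++ ⋯ ++ ws (n-1) ++ u n`. -/
def interleave {Δ : Type} (n : ℕ) (u : Fin (n + 1) → List Δ) (ws : Fin n → List Δ) :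
    List Δ :=
  u 0 ++ (List.finRange n).foldr (fun i acc => ws i ++ u i.succ ++ acc) []

/-- The partial function `⟦M⟧_q` computed by state `q`. -/
def LTW.semState {F Δ Q : Type} {ar : F → ℕ} (M : LTW F ar Δ Q) :
    RTree F ar → Q → Option (List Δ)
  | .node f ts, q =>
    match M.rules q f with
    | none => none
    | some r =>
      if h : ∀ i : Fin (ar f), (M.semState (ts (r.perm i)) (r.st i)).isSome then
        some (interleave (ar f) r.word fun i => (M.semState (ts (r.perm i)) (r.st i)).get (h i))
      else none

/-- The partial function `⟦M⟧` computed by the transducer. -/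
def LTW.sem {F Δ Q : Type} {ar : F → ℕ} (M : LTW F ar Δ Q) (t : RTree F ar) :
    Option (List Δ) :=
  (M.semState t M.init).map fun w => M.pre ++ w ++ M.post

/-- The output language `L_q` of a state. -/
def LTW.lang {F Δ Q : Type} {ar : F → ℕ} (M : LTW F ar Δ Q) (q : Q) : Set (List Δ) :=
  {w | ∃ t, M.semState t q = some w}

/-- Standing assumption: every state has nonempty domain. -/
def LTW.NonemptyDoms {F Δ Q : Type} {ar : F → ℕ} (M : LTW F ar Δ Q) : Prop :=
  ∀ q : Q, ∃ t w, M.semState t q = some w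

/-- `w^n`, the `n`-fold concatenation of the word `w`. -/
def listPow {Δ : Type} (w : List Δ) : ℕ → List Δ
  | 0 => []
  | n + 1 => w ++ listPow w n

/-- `lcp L = ε`: the only common prefix of all words of `L` is the empty word. -/
def LcpEps {Δ : Type} (L : Set (List Δ)) : Prop :=
  ∀ w : List Δ, (∀ v ∈ L, w <+: v) → w = []

/-- `lcs L = ε`: the only common suffix of all words of `L` is the empty word. -/
def LcsEps {Δ : Type} (L : Set (List Δ)) : Prop :=
  ∀ w : List Δ, (∀ v ∈ L, w <:+ v) → w = []

/-- A language is earliest if `lcp L = lcs L = ε`. -/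
def EarliestLang {Δ : Type} (L : Set (List Δ)) : Prop := LcpEps L ∧ LcsEps L

/-- `L ⊆ w*`. -/
def SubPow {Δ : Type} (w : List Δ) (L : Set (List Δ)) : Prop :=
  ∀ v ∈ L, ∃ n : ℕ, v = listPow w n

/-- `L` is periodic of period `w`: `w` is a smallest word with `L ⊆ w*`. -/
def PeriodicOf {Δ : Type} (L : Set (List Δ)) (w : List Δ) : Prop :=
  SubPow w L ∧ ∀ w' : List Δ, SubPow w' L → w.length ≤ w'.length

/-- `L` is periodic. -/
def Periodic {Δ : Type} (L : Set (List Δ)) : Prop := ∃ w, PeriodicOf L w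

/-- `L` is quasi-periodic on the left of handle `u` and period `w`:
`w` is a smallest word with `L ⊆ u w*`. -/
def QPLeftOf {Δ : Type} (L : Set (List Δ)) (u w : List Δ) : Prop :=
  (∀ v ∈ L, ∃ n : ℕ, v = u ++ listPow w n) ∧
  ∀ w' : List Δ, (∀ v ∈ L, ∃ n : ℕ, v = u ++ listPow w' n) → w.length ≤ w'.length

/-- `L` is quasi-periodic on the right of handle `u` and period `w`:
`w` is a smallest word with `L ⊆ w* u`. -/
def QPRightOf {Δ : Type} (L : Set (List Δ)) (u w : List Δ) : Prop :=
  (∀ v ∈ L, ∃ n : ℕ, v = listPow w n ++ u) ∧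
  ∀ w' : List Δ, (∀ v ∈ L, ∃ n : ℕ, v = listPow w' n ++ u) → w.length ≤ w'.length

/-- `L` is quasi-periodic (on the left or on the right). -/
def QuasiPeriodic {Δ : Type} (L : Set (List Δ)) : Prop :=
  (∃ u w, QPLeftOf L u w) ∨ (∃ u w, QPRightOf L u w)

/-- The language `L u = { v u : v ∈ L }`. -/
def appendLang {Δ : Type} (L : Set (List Δ)) (u : List Δ) : Set (List Δ) :=
  {v | ∃ x ∈ L, v = x ++ u}

/-- The language `L₁ u L₂ = { a u b : a ∈ L₁, b ∈ L₂ }`. -/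
def pairLang {Δ : Type} (L₁ : Set (List Δ)) (u : List Δ) (L₂ : Set (List Δ)) :
    Set (List Δ) :=
  {v | ∃ a ∈ L₁, ∃ b ∈ L₂, v = a ++ u ++ b}

/-- An LTW is earliest: every state `q` satisfies `lcp L_q = lcs L_q = ε`, and in every rule
every part `qᵢ(x) uᵢ` satisfies `lcp (L_{qᵢ} uᵢ) = ε`. -/
def LTW.Earliest {F Δ Q : Type} {ar : F → ℕ} (M : LTW F ar Δ Q) : Prop :=
  (∀ q : Q, EarliestLang (M.lang q)) ∧
  ∀ (q : Q) (f : F) (r : LTWRule Δ Q (ar f)), M.rules q f = some r →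
    ∀ i : Fin (ar f), LcpEps (appendLang (M.lang (r.st i)) (r.word i.succ))

/-- An erasing state: `L_q = {ε}`. -/
def LTW.Erasing {F Δ Q : Type} {ar : F → ℕ} (M : LTW F ar Δ Q) (q : Q) : Prop :=
  M.lang q = {([] : List Δ)}

/-- Erase-ordered: in every rule, if `qᵢ` is erasing then every later `q_j` is erasing,
`σ(i) ≤ σ(j)` and `u_j = ε`. -/
def LTW.EraseOrdered {F Δ Q : Type} {ar : F → ℕ} (M : LTW F ar Δ Q) : Prop :=
  ∀ (q : Q) (f : F) (r : LTWRule Δ Q (ar f)), M.rules q f = some r →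
    ∀ i j : Fin (ar f), M.Erasing (r.st i) → i ≤ j →
      M.Erasing (r.st j) ∧ r.perm i ≤ r.perm j ∧ r.word j.succ = []

/-- Co-reachable pairs of states of two transducers over the same input alphabet. -/
inductive CoReach {F Δ Q₁ Q₂ : Type} {ar : F → ℕ}
    (M₁ : LTW F ar Δ Q₁) (M₂ : LTW F ar Δ Q₂) : Q₁ → Q₂ → Prop
  | base : CoReach M₁ M₂ M₁.init M₂.init
  | step {q₁ : Q₁} {q₂ : Q₂} {f : F} {r₁ : LTWRule Δ Q₁ (ar f)} {r₂ : LTWRule Δ Q₂ (ar f)}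
      {i j : Fin (ar f)} :
      CoReach M₁ M₂ q₁ q₂ → M₁.rules q₁ f = some r₁ → M₂.rules q₂ f = some r₂ →
      r₁.perm i = r₂.perm j → CoReach M₁ M₂ (r₁.st i) (r₂.st j)

/-- Two LTWs are same-ordered: co-reachable states either both lack a rule for `f`,
or have rules for `f` with the same permutation. -/
def SameOrdered {F Δ Q₁ Q₂ : Type} {ar : F → ℕ}
    (M₁ : LTW F ar Δ Q₁) (M₂ : LTW F ar Δ Q₂) : Prop :=
  ∀ q₁ q₂, CoReach M₁ M₂ q₁ q₂ → ∀ f : F,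
    (M₁.rules q₁ f = none ∧ M₂.rules q₂ f = none) ∨
    ∃ (r₁ : LTWRule Δ Q₁ (ar f)) (r₂ : LTWRule Δ Q₂ (ar f)),
      M₁.rules q₁ f = some r₁ ∧ M₂.rules q₂ f = some r₂ ∧ r₁.perm = r₂.perm

/-- `Accessible q p`: state `p` is accessible from state `q`. -/
inductive LTW.Accessible {F Δ Q : Type} {ar : F → ℕ} (M : LTW F ar Δ Q) : Q → Q → Prop
  | refl (q : Q) : M.Accessible q q
  | step {q p : Q} {f : F} {r : LTWRule Δ Q (ar f)} (i : Fin (ar f)) :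
      M.Accessible q p → M.rules p f = some r → M.Accessible q (r.st i)

/-- Partial normal form. -/
def LTW.PartialNormalForm {F Δ Q : Type} {ar : F → ℕ} (M : LTW F ar Δ Q) : Prop :=
  (∀ q : Q, QuasiPeriodic (M.lang q) → EarliestLang (M.lang q)) ∧
  M.EraseOrdered ∧
  ∀ (q : Q) (f : F) (r : LTWRule Δ Q (ar f)), M.rules q f = some r →
    ∀ (i : ℕ) (hi : i + 1 < ar f),
      QuasiPeriodic (pairLang (M.lang (r.st ⟨i, Nat.lt_of_succ_lt hi⟩))
          (r.word (Fin.succ ⟨i, Nat.lt_of_succ_lt hi⟩)) (M.lang (r.st ⟨i + 1, hi⟩))) →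
      EarliestLang (pairLang (M.lang (r.st ⟨i, Nat.lt_of_succ_lt hi⟩))
          (r.word (Fin.succ ⟨i, Nat.lt_of_succ_lt hi⟩)) (M.lang (r.st ⟨i + 1, hi⟩))) ∧
      r.perm ⟨i, Nat.lt_of_succ_lt hi⟩ < r.perm ⟨i + 1, hi⟩

section Words

variable {Δ : Type}

theorem listPow_add (w : List Δ) (m n : ℕ) :
    listPow w (m + n) = listPow w m ++ listPow w n := by
  induction m with
  | zero => simp [listPow]
  | succ m ih => simp [Nat.succ_add, listPow, ih]

theorem length_listPow (w : List Δ) (n : ℕ) : (listPow w n).length = n * w.length := by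
  induction n with
  | zero => simp [listPow]
  | succ n ih => rw [listPow, List.length_append, ih, Nat.succ_mul, add_comm]

theorem listPow_mul_length_div_length (w : List Δ) (n : ℕ) :
    listPow w (n * w.length / w.length) = listPow w n := by
  rcases w.length.eq_zero_or_pos with hw | hw
  · have listPow_eq_nil (k : ℕ) : listPow w k = [] :=
      List.length_eq_zero_iff.mp (by rw [length_listPow, hw, mul_zero])
    rw [listPow_eq_nil, listPow_eq_nil]
  · rw [Nat.mul_div_cancel _ hw]

theorem interleave_zero (u : Fin 1 → List Δ) (ws : Fin 0 → List Δ) :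
    interleave 0 u ws = u 0 := by
  simp [interleave]

theorem interleave_succ (n : ℕ) (u : Fin (n + 2) → List Δ) (ws : Fin (n + 1) → List Δ) :
    interleave (n + 1) u ws =
      u 0 ++ ws 0 ++ interleave n (fun j => u j.succ) (fun i => ws i.succ) := by
  simp [interleave, List.finRange_succ, List.foldr_map]

theorem length_interleave (n : ℕ) (u : Fin (n + 1) → List Δ) (ws : Fin n → List Δ) :
    (interleave n u ws).length = ∑ j, (u j).length + ∑ i, (ws i).length := by
  induction n with
  | zero => simp [interleave_zero]
  | succ n ih =>
    rw [interleave_succ, Fin.sum_univ_succ, Fin.sum_univ_succ (f := fun i => (ws i).length)]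
    simp only [List.length_append, ih]
    ring

theorem exists_length_interleave_update {n : ℕ} (u : Fin (n + 1) → List Δ)
    (ws : Fin n → List Δ) (i : Fin n) :
    ∃ c, ∀ v, (interleave n u (Function.update ws i v)).length = c + v.length := by
  refine ⟨∑ j, (u j).length + ∑ k ∈ Finset.univ \ {i}, (ws k).length, fun v => ?_⟩
  simp only [length_interleave, Function.apply_update (fun _ => List.length) ws i v,
    Finset.sum_update_of_mem (Finset.mem_univ i)]
  ring

theorem interleave_listPow (w : List Δ) {n : ℕ} (c : Fin (n + 1) → ℕ) (k : Fin n → ℕ) :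
    interleave n (fun j => listPow w (c j)) (fun i => listPow w (k i)) =
      listPow w (∑ j, c j + ∑ i, k i) := by
  induction n with
  | zero => simp [interleave_zero]
  | succ n ih =>
    rw [interleave_succ, ih, ← listPow_add, ← listPow_add, Fin.sum_univ_succ c,
      Fin.sum_univ_succ k]
    congr 1
    ring

theorem interleave_absorb_handles {n : ℕ} (p s : List Δ) (u : Fin (n + 1) → List Δ)
    (A B ws : Fin n → List Δ) :
    interleave n (fun j => (Fin.cons p B : Fin (n + 1) → List Δ) j ++ u j ++
        (Fin.snoc A s : Fin (n + 1) → List Δ) j) ws =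
      p ++ interleave n u (fun i => A i ++ ws i ++ B i) ++ s := by
  induction n generalizing p with
  | zero => simp [interleave_zero, Fin.snoc]
  | succ n ih =>
    induction A using Fin.consCases with | _ a A => ?_
    induction B using Fin.consCases with | _ b B => ?_
    simp only [interleave_succ, ← Fin.cons_snoc_eq_snoc_cons, Fin.cons_zero, Fin.cons_succ, ih]
    simp only [List.append_assoc]

end Words

section Languages

variable {Δ : Type} {L : Set (List Δ)}

theorem EarliestLang.of_nil_mem (h : [] ∈ L) : EarliestLang L :=
  ⟨fun _ hw => List.prefix_nil.mp (hw _ h), fun _ hw => List.suffix_nil.mp (hw _ h)⟩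

/-- The length of a shortest word of `L` (and `0` if `L` is empty). -/
noncomputable def minLen (L : Set (List Δ)) : ℕ := sInf (List.length '' L)

theorem exists_length_eq_minLen (hL : L.Nonempty) : ∃ v ∈ L, v.length = minLen L :=
  Nat.sInf_mem (hL.image List.length)

theorem minLen_le_length {v : List Δ} (hv : v ∈ L) : minLen L ≤ v.length :=
  Nat.sInf_le ⟨v, hv, rfl⟩

/-- By how much `v` is longer than a shortest word of `L`. The subtraction truncates only for
`v ∉ L`. -/
noncomputable def excess (L : Set (List Δ)) (v : List Δ) : ℕ := v.length - minLen L

/-- All words of `L` have the same length modulo `d`. This is the trace of quasi-periodicity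
which states inherit from the states calling them. -/
def LengthsCongruent (d : ℕ) (L : Set (List Δ)) : Prop :=
  ∀ v ∈ L, ∀ v' ∈ L, v.length ≡ v'.length [MOD d]

theorem LengthsCongruent.dvd_excess {d : ℕ} (h : LengthsCongruent d L) {v : List Δ}
    (hv : v ∈ L) : d ∣ excess L v := by
  obtain ⟨m, hm, hmin⟩ := exists_length_eq_minLen ⟨v, hv⟩
  rw [excess, ← Nat.modEq_iff_dvd' (minLen_le_length hv), ← hmin]
  exact h m hm v hv

/-- `w ^ n`, where `n` counts how many periods `w` the word `v` exceeds a shortest word of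
`L` by. -/
noncomputable def periodicPart (w : List Δ) (L : Set (List Δ)) (v : List Δ) : List Δ :=
  listPow w (excess L v / w.length)

theorem nil_mem_image_periodicPart (w : List Δ) (hL : L.Nonempty) :
    [] ∈ periodicPart w L '' L := by
  obtain ⟨m, hm, hmin⟩ := exists_length_eq_minLen hL
  exact ⟨m, hm, by simp [periodicPart, excess, hmin, listPow]⟩

/-- `L ⊆ A w* B`, and the handles are tight: `A B` itself belongs to `L`. -/
structure HandleFactorization (L : Set (List Δ)) (A w B : List Δ) : Prop where
  append_mem : A ++ B ∈ L
  exists_eq : ∀ v ∈ L, ∃ n, v = A ++ listPow w n ++ B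

theorem QuasiPeriodic.exists_handleFactorization (h : QuasiPeriodic L) (hL : L.Nonempty) :
    ∃ A w B, HandleFactorization L A w B := by
  classical
  obtain ⟨x, hx⟩ := hL
  rcases h with ⟨u, w, h, -⟩ | ⟨u, w, h, -⟩
  · have hex : ∃ k, u ++ listPow w k ∈ L := (h x hx).imp fun _ hk => by rwa [← hk]
    refine ⟨u ++ listPow w (Nat.find hex), w, [], by simpa using Nat.find_spec hex, ?_⟩
    intro v hv
    obtain ⟨n, rfl⟩ := h v hv
    obtain ⟨l, rfl⟩ := Nat.exists_eq_add_of_le (Nat.find_min' hex hv)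
    exact ⟨l, by simp [listPow_add]⟩
  · have hex : ∃ k, listPow w k ++ u ∈ L := (h x hx).imp fun _ hk => by rwa [← hk]
    refine ⟨[], w, listPow w (Nat.find hex) ++ u, by simpa using Nat.find_spec hex, ?_⟩
    intro v hv
    obtain ⟨n, rfl⟩ := h v hv
    obtain ⟨l, rfl⟩ := Nat.exists_eq_add_of_le' (Nat.find_min' hex hv)
    exact ⟨l, by simp [listPow_add]⟩

namespace HandleFactorization

variable {A w B : List Δ}

theorem minLen_eq (h : HandleFactorization L A w B) : minLen L = (A ++ B).length := by
  refine (minLen_le_length h.append_mem).antisymm ?_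
  obtain ⟨m, hm, hmin⟩ := exists_length_eq_minLen ⟨_, h.append_mem⟩
  obtain ⟨n, rfl⟩ := h.exists_eq m hm
  rw [← hmin]
  simp only [List.length_append]
  omega

theorem excess_eq (h : HandleFactorization L A w B) (n : ℕ) :
    excess L (A ++ listPow w n ++ B) = n * w.length := by
  simp only [excess, h.minLen_eq, List.length_append, length_listPow]
  omega

theorem lengthsCongruent (h : HandleFactorization L A w B) : LengthsCongruent w.length L := by
  have length_modEq {v : List Δ} (hv : v ∈ L) : v.length ≡ (A ++ B).length [MOD w.length] := by
    obtain ⟨n, rfl⟩ := h.exists_eq v hv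
    simp only [Nat.ModEq, List.length_append, length_listPow, Nat.add_right_comm _ _ B.length,
      Nat.add_mul_mod_self_right]
  exact fun v hv v' hv' => (length_modEq hv).trans (length_modEq hv').symm

theorem eq_append_periodicPart (h : HandleFactorization L A w B) {v : List Δ} (hv : v ∈ L) :
    v = A ++ periodicPart w L v ++ B := by
  obtain ⟨n, rfl⟩ := h.exists_eq v hv
  rw [periodicPart, h.excess_eq, listPow_mul_length_div_length]

end HandleFactorization

end Languages

namespace LTW

variable {F Δ Q Q' ι : Type} {ar : F → ℕ} {M : LTW F ar Δ Q}

theorem semState_node_eq_some {f : F} {ts : Fin (ar f) → RTree F ar} {q : Q} {v : List Δ} :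
    M.semState (.node f ts) q = some v ↔
      ∃ r, M.rules q f = some r ∧ ∃ ws : Fin (ar f) → List Δ,
        (∀ i, M.semState (ts (r.perm i)) (r.st i) = some (ws i)) ∧
        interleave (ar f) r.word ws = v := by
  cases hr : M.rules q f with
  | none => simp [semState, hr]
  | some r =>
    simp only [semState, hr, Option.dite_none_right_eq_some, Option.some.injEq,
      exists_eq_left']
    constructor
    · rintro ⟨hdef, h⟩
      exact ⟨_, fun i => (Option.some_get (hdef i)).symm, h⟩
    · rintro ⟨ws, hws, h⟩
      exact ⟨fun i => by simp [hws], by simpa [hws] using h⟩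

theorem NonemptyDoms.lang_nonempty (hdom : M.NonemptyDoms) (q : Q) : (M.lang q).Nonempty :=
  let ⟨t, w, h⟩ := hdom q
  ⟨w, t, h⟩

/-- Linearity of the rule: the subtrees producing the words `ws` can be chosen independently. -/
theorem interleave_mem_lang {q : Q} {f : F} {r : LTWRule Δ Q (ar f)} (hr : M.rules q f = some r)
    {ws : Fin (ar f) → List Δ} (hws : ∀ i, ws i ∈ M.lang (r.st i)) :
    interleave (ar f) r.word ws ∈ M.lang q := by
  choose ts hts using hws
  exact ⟨.node f (ts ∘ r.perm.symm),
    semState_node_eq_some.mpr ⟨r, hr, ws, fun i => by simp [hts], rfl⟩⟩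

/-- The output maps `g x`, applied to the outputs of the states `π x` of `M`, can be computed
rule by rule: every rule of `π x` has a counterpart with words `u`, the same permutation, and
states `s i` standing for the original ones. -/
def RuleCompatible (M : LTW F ar Δ Q) (π : Q' → Q) (g : Q' → List Δ → List Δ) : Prop :=
  ∀ x f r, M.rules (π x) f = some r →
    ∃ (u : Fin (ar f + 1) → List Δ) (s : Fin (ar f) → Q'), (∀ i, π (s i) = r.st i) ∧
      ∀ ws : Fin (ar f) → List Δ, (∀ i, ws i ∈ M.lang (r.st i)) →
        g x (interleave (ar f) r.word ws) = interleave (ar f) u fun i => g (s i) (ws i)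

theorem RuleCompatible.exists_rules_semState_eq_map {π : Q' → Q} {g : Q' → List Δ → List Δ}
    (h : M.RuleCompatible π g) :
    ∃ rules : Q' → (f : F) → Option (LTWRule Δ Q' (ar f)), ∀ pre init post t x,
      (LTW.mk pre init post rules).semState t x = (M.semState t (π x)).map (g x) := by
  choose u s hπ hg using h
  refine ⟨fun x f => (M.rules (π x) f).pmap (fun r hr => ⟨u x f r hr, s x f r hr, r.perm⟩)
    fun _ hr => hr, fun pre init post t => ?_⟩
  induction t with
  | node f ts ih =>
    intro x
    ext v
    simp only [semState_node_eq_some, Option.map_eq_some_iff, Option.pmap_eq_some_iff, ih]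
    constructor
    · rintro ⟨_, ⟨r, hr, -, rfl⟩, ws', hws', rfl⟩
      choose ws hws hgws using hws'
      simp only [hπ] at hws
      refine ⟨_, ⟨r, hr, ws, hws, rfl⟩, ?_⟩
      simp only [hg x f r hr ws fun i => ⟨_, hws i⟩, hgws]
    · rintro ⟨_, ⟨r, hr, ws, hws, rfl⟩, rfl⟩
      exact ⟨_, ⟨r, hr, hr, rfl⟩, fun i => g (s x f r hr i) (ws i),
        fun i => ⟨ws i, by simp only [hπ, hws], rfl⟩, (hg x f r hr ws fun i => ⟨_, hws i⟩).symm⟩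

theorem RuleCompatible.exists_sem_eq_and_lang_eq_image {π : Q' → Q} {g : Q' → List Δ → List Δ}
    (h : M.RuleCompatible π g) {x₀ : Q'} {A B : List Δ} (hx₀ : π x₀ = M.init)
    (hAB : ∀ v ∈ M.lang M.init, v = A ++ g x₀ v ++ B) :
    ∃ M' : LTW F ar Δ Q', M.sem = M'.sem ∧ ∀ x, M'.lang x = g x '' M.lang (π x) := by
  obtain ⟨rules, hrules⟩ := h.exists_rules_semState_eq_map
  refine ⟨⟨M.pre ++ A, x₀, B ++ M.post, rules⟩, ?_, fun x => ?_⟩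
  · funext t
    rw [sem, sem, hrules, hx₀, Option.map_map]
    refine Option.map_congr fun v hv => ?_
    rw [Function.comp_apply]
    conv_lhs => rw [hAB v ⟨t, hv⟩]
    simp only [List.append_assoc]
  · ext v
    simp only [lang, hrules, Option.map_eq_some_iff, Set.mem_ofPred_eq, Set.mem_image]
    exact ⟨fun ⟨t, w, hw, hv⟩ => ⟨w, ⟨t, hw⟩, hv⟩, fun ⟨w, ⟨t, hw⟩, hv⟩ => ⟨t, w, hw, hv⟩⟩

theorem lengthsCongruent_child (hdom : M.NonemptyDoms) {d : ℕ} {q : Q}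
    (hq : LengthsCongruent d (M.lang q)) {f : F} {r : LTWRule Δ Q (ar f)}
    (hr : M.rules q f = some r) (i : Fin (ar f)) : LengthsCongruent d (M.lang (r.st i)) := by
  intro v hv v' hv'
  choose m hm using fun j => hdom.lang_nonempty (r.st j)
  have update_mem {w : List Δ} (hw : w ∈ M.lang (r.st i)) :
      interleave (ar f) r.word (Function.update m i w) ∈ M.lang q :=
    interleave_mem_lang hr <| Function.forall_update_iff m (fun j w => w ∈ M.lang (r.st j))
      |>.mpr ⟨hw, fun j _ => hm j⟩
  obtain ⟨c, hc⟩ := exists_length_interleave_update r.word m i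
  have := hq _ (update_mem hv) _ (update_mem hv')
  rw [hc, hc] at this
  exact this.add_left_cancel' c

theorem exists_excess_interleave_div (hdom : M.NonemptyDoms) {d : ℕ} {q : Q}
    (hq : LengthsCongruent d (M.lang q)) {f : F} {r : LTWRule Δ Q (ar f)}
    (hr : M.rules q f = some r) :
    ∃ c, ∀ ws : Fin (ar f) → List Δ, (∀ i, ws i ∈ M.lang (r.st i)) →
      excess (M.lang q) (interleave (ar f) r.word ws) / d =
        c + ∑ i, excess (M.lang (r.st i)) (ws i) / d := by
  choose m hm hmin using fun i => exists_length_eq_minLen (hdom.lang_nonempty (r.st i))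
  have hm_mem := interleave_mem_lang hr hm
  refine ⟨excess (M.lang q) (interleave (ar f) r.word m) / d, fun ws hws => ?_⟩
  have hsum : excess (M.lang q) (interleave (ar f) r.word ws) =
      excess (M.lang q) (interleave (ar f) r.word m) +
        ∑ i, excess (M.lang (r.st i)) (ws i) := by
    have hle (i) : minLen (M.lang (r.st i)) ≤ (ws i).length := minLen_le_length (hws i)
    have hle_sum := Finset.sum_le_sum fun i (_ : i ∈ Finset.univ) => hle i
    have hle_node := minLen_le_length hm_mem
    simp only [length_interleave, hmin] at hle_node
    simp only [excess, length_interleave, hmin, Finset.sum_tsub_distrib _ fun i _ => hle i]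
    omega
  have hdvd (i) : d ∣ excess (M.lang (r.st i)) (ws i) :=
    (lengthsCongruent_child hdom hq hr i).dvd_excess (hws i)
  rw [hsum, Nat.add_div_of_dvd_right (hq.dvd_excess hm_mem), Nat.sum_div fun i _ => hdvd i]

/-- States of the transducer in which all quasi-periodic states are earliest. A state `plain q`
computes the same function as `q`, and `periodic i q` computes the periodic part of the output
of `q` with respect to the word `w i`. -/
inductive ReducedState (M : LTW F ar Δ Q) (w : ι → List Δ) : Type
  | plain (q : Q) (hq : ¬ QuasiPeriodic (M.lang q))
  | periodic (i : ι) (q : Q) (hq : LengthsCongruent (w i).length (M.lang q))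

namespace ReducedState

variable {w : ι → List Δ}

/-- The state of `M` simulated by a reduced state. -/
def proj : ReducedState M w → Q
  | plain q _ => q
  | periodic _ q _ => q

/-- The output of a reduced state as a function of the output of the state it simulates. -/
noncomputable def out : ReducedState M w → List Δ → List Δ
  | plain _ _ => id
  | periodic i q _ => periodicPart (w i) (M.lang q)

instance [Finite ι] [Finite Q] : Finite (ReducedState M w) := by
  let code : ReducedState M w → Option ι × Q
    | plain q _ => (none, q)
    | periodic i q _ => (some i, q)
  refine Finite.of_injective code ?_
  rintro ⟨⟩ ⟨⟩ h <;> simp_all [code]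

theorem exists_eq_append_out
    (hw : ∀ q, QuasiPeriodic (M.lang q) → ∃ i A B, HandleFactorization (M.lang q) A (w i) B)
    (q : Q) : ∃ (x : ReducedState M w) (A B : List Δ),
      x.proj = q ∧ ∀ v ∈ M.lang q, v = A ++ x.out v ++ B := by
  by_cases hq : QuasiPeriodic (M.lang q)
  · obtain ⟨i, A, B, h⟩ := hw q hq
    exact ⟨periodic i q h.lengthsCongruent, A, B, rfl, fun v hv => h.eq_append_periodicPart hv⟩
  · exact ⟨plain q hq, [], [], rfl, fun v _ => by simp [out]⟩

theorem ruleCompatible (hdom : M.NonemptyDoms)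
    (hw : ∀ q, QuasiPeriodic (M.lang q) → ∃ i A B, HandleFactorization (M.lang q) A (w i) B) :
    M.RuleCompatible (proj (M := M) (w := w)) out := by
  rintro (⟨q, hq⟩ | ⟨i, q, hq⟩) f r hr
  · choose x A B hproj hout using fun i => exists_eq_append_out hw (r.st i)
    refine ⟨fun j => (Fin.cons [] B : Fin (ar f + 1) → List Δ) j ++ r.word j ++
      (Fin.snoc A [] : Fin (ar f + 1) → List Δ) j, x, hproj, fun ws hws => ?_⟩
    rw [interleave_absorb_handles, List.nil_append, List.append_nil, out, id]
    exact congrArg _ (funext fun i => hout i _ (hws i))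
  · obtain ⟨c, hc⟩ := exists_excess_interleave_div hdom hq hr
    refine ⟨fun j => listPow (w i) (Pi.single (M := fun _ => ℕ) 0 c j),
      fun k => periodic i (r.st k) (lengthsCongruent_child hdom hq hr k), fun _ => rfl,
      fun ws hws => ?_⟩
    simp only [out, periodicPart, interleave_listPow, Fintype.sum_pi_single', hc ws hws]

theorem earliestLang_image_out (hdom : M.NonemptyDoms) (x : ReducedState M w)
    (hx : QuasiPeriodic (x.out '' M.lang x.proj)) : EarliestLang (x.out '' M.lang x.proj) := by
  cases x with
  | plain q hq => exact absurd (Set.image_id (M.lang q) ▸ hx) hq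
  | periodic i q _ =>
    exact .of_nil_mem (nil_mem_image_periodicPart (w i) (hdom.lang_nonempty q))

end ReducedState

end LTW

theorem exists_equivalent_quasiPeriodic_states_earliest_general
    {F Δ Q : Type} {ar : F → ℕ} (M : LTW F ar Δ Q) (hdom : M.NonemptyDoms) :
    ∃ (Q' : Type) (M' : LTW F ar Δ Q'), (Finite Q → Finite Q') ∧
      M.sem = M'.sem ∧
      ∀ q' : Q', QuasiPeriodic (M'.lang q') → EarliestLang (M'.lang q') := by
  choose A w B hfactor using fun q (hq : QuasiPeriodic (M.lang q)) =>
    hq.exists_handleFactorization (hdom.lang_nonempty q)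
  let period (p : {q // QuasiPeriodic (M.lang q)}) : List Δ := w p p.2
  have hperiod (q : Q) (hq : QuasiPeriodic (M.lang q)) :
      ∃ p A B, HandleFactorization (M.lang q) A (period p) B :=
    ⟨⟨q, hq⟩, A q hq, B q hq, hfactor q hq⟩
  obtain ⟨x₀, _, _, hproj, hout⟩ := LTW.ReducedState.exists_eq_append_out hperiod M.init
  obtain ⟨M', hsem, hlang⟩ :=
    (LTW.ReducedState.ruleCompatible hdom hperiod).exists_sem_eq_and_lang_eq_image hproj hout
  refine ⟨LTW.ReducedState M period, M', fun _ => inferInstance, hsem, fun x hx => ?_⟩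
  rw [hlang] at hx ⊢
  exact x.earliestLang_image_out hdom hx

/-- every LTW has an equivalent LTW in which every quasi-periodic state
is earliest. -/
theorem exists_equivalent_quasiPeriodic_states_earliest
    {F Δ Q : Type} {ar : F → ℕ} [Finite Q]
    (M : LTW F ar Δ Q) (hdom : M.NonemptyDoms) :
    ∃ (Q' : Type) (_ : Finite Q') (M' : LTW F ar Δ Q'),
      M.sem = M'.sem ∧
      ∀ q' : Q', QuasiPeriodic (M'.lang q') → EarliestLang (M'.lang q') := by
  obtain ⟨Q', M', hfin, h⟩ := exists_equivalent_quasiPeriodic_states_earliest_general M hdom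
  exact ⟨Q', hfin inferInstance, M', h⟩

end LTWpaper
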